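/- For q = 2^s with s ≥ 2 and all β, γ ∈ F_q, the matrix identity U_β^{(7)} · X^γ · U_β^{(7)} = ε(tr(βγ^7)) · X^γ · U^{(3)}_{(βγ)^{2^{s−1}} + βγ^4} · U^{(5)}_{βγ^2} · Z^{(βγ^3)^{2^{s−2}} + (βγ^5)^{2^{s−1}} + βγ^6} holds in the q×q complex matrices (here x ↦ x^{2^{s−1}} and x ↦ x^{2^{s−2}} are the unique square-root and fourth-root maps in F_q). -/

import Mathlib

noncomputable section

/-- The trace map `tr : F_{2^s} → F_2 ⊆ F_{2^s}`, `tr γ = Σ_{i=0}^{s-1} γ^{2^i}`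
(its values lie in the prime field `{0, 1}`). -/
def trF {F : Type} [Field F] (s : ℕ) (x : F) : F := ∑ i ∈ Finset.range s, x ^ 2 ^ i

/-- `ε ∘ tr : F_{2^s} → ℂ`, where `ε 0 = 1` and `ε 1 = -1` on the prime field `F_2`. -/
def epsTr {F : Type} [Field F] [DecidableEq F] (s : ℕ) (x : F) : ℂ := if trF s x = 0 then 1 else -1

/-- The Pauli `X^β`: `(X^β)_{η,η'} = 1` if `η = η' + β`, else `0`. -/
def Xm {F : Type} [Field F] [Fintype F] [DecidableEq F] (β : F) : Matrix F F ℂ :=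
  Matrix.of fun η η' => if η = η' + β then 1 else 0

/-- The Pauli `Z^γ`: diagonal with entry `ε(tr(γη))` at `η`. -/
def Zm {F : Type} [Field F] [Fintype F] [DecidableEq F] (s : ℕ) (γ : F) : Matrix F F ℂ :=
  Matrix.diagonal fun η => epsTr s (γ * η)

/-- The diagonal gate `U_β^{(n)}` with diagonal entry `ε(tr(β η^n))` at `η`. -/
def Um {F : Type} [Field F] [Fintype F] [DecidableEq F] (s : ℕ) (n : ℕ) (β : F) :
    Matrix F F ℂ :=
  Matrix.diagonal fun η => epsTr s (β * η ^ n)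

/-!
Moving a diagonal matrix to the right past `X^γ` translates its entries by `γ`, and `ε ∘ tr` turns
sums into products, so the left-hand side is `X^γ` times the diagonal matrix with entries
`ε(tr(β((η + γ)^7 + η^7)))`. Since `7 = 2^3 - 1`, all binomial coefficients in `(η + γ)^7` are odd,
and the argument of the trace is `∑_{i < 7} βγ^(7 - i) η^i`. The trace is invariant under squaring,
so `tr(a η^(2^k m)) = tr(a^(2^(s - k)) η^m)`; this turns the powers `η^6`, `η^4`, `η^2` into `η^3`,
`η`, `η`.
-/

theorem add_pow_two_pow_sub_one {R : Type*} [CommSemiring R] [CharP R 2] (x y : R) (k : ℕ) :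
    (x + y) ^ (2 ^ k - 1) = ∑ i ∈ Finset.range (2 ^ k), x ^ i * y ^ (2 ^ k - 1 - i) := by
  induction k with
  | zero => simp
  | succ k ih =>
    have hpos : 0 < 2 ^ k := by positivity
    have hexp : 2 ^ (k + 1) - 1 = 2 ^ k + (2 ^ k - 1) := by rw [pow_succ]; omega
    rw [hexp, pow_add, add_pow_char_pow, ih, pow_succ, mul_two, Finset.sum_range_add,
      add_mul, add_comm, Finset.mul_sum, Finset.mul_sum]
    congr 1 <;> refine Finset.sum_congr rfl fun i hi => ?_ <;> rw [Finset.mem_range] at hi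
    · rw [show 2 ^ k + (2 ^ k - 1) - i = 2 ^ k + (2 ^ k - 1 - i) by omega, pow_add]
      ring
    · rw [Nat.add_sub_add_left, pow_add, mul_assoc]

section Trace

variable {s : ℕ} {F : Type} [Field F]

theorem trF_add [CharP F 2] (x y : F) : trF s (x + y) = trF s x + trF s y := by
  simp only [trF, add_pow_char_pow, Finset.sum_add_distrib]

theorem sq_trF [CharP F 2] (x : F) : trF s x ^ 2 = trF s (x ^ 2) := by
  simp only [trF, CharTwo.sum_sq, pow_right_comm x]

variable [Fintype F]

theorem trF_sq (hF : Fintype.card F = 2 ^ s) (x : F) : trF s (x ^ 2) = trF s x := by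
  refine add_right_cancel (b := x) ?_
  calc
    trF s (x ^ 2) + x = ∑ i ∈ Finset.range (s + 1), x ^ 2 ^ i := by
      simp only [trF, Finset.sum_range_succ', pow_succ', pow_mul, pow_zero, pow_one]
    _ = trF s x + x ^ Fintype.card F := by rw [Finset.sum_range_succ, hF, trF]
    _ = trF s x + x := by rw [FiniteField.pow_card]

theorem trF_pow_two_pow (hF : Fintype.card F = 2 ^ s) (k : ℕ) (x : F) :
    trF s (x ^ 2 ^ k) = trF s x := by
  induction k with
  | zero => rw [pow_zero, pow_one]
  | succ k ih => rw [pow_succ, pow_mul, trF_sq hF, ih]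

theorem trF_pow_two_pow_sub_mul (hF : Fintype.card F = 2 ^ s) {k : ℕ} (hk : k ≤ s) (x y : F) :
    trF s (x ^ 2 ^ (s - k) * y) = trF s (x * y ^ 2 ^ k) := by
  rw [← trF_pow_two_pow hF k, mul_pow, ← pow_mul, ← pow_add, Nat.sub_add_cancel hk, ← hF,
    FiniteField.pow_card]

theorem trF_eq_zero_or_one (hF : Fintype.card F = 2 ^ s) (x : F) :
    trF s x = 0 ∨ trF s x = 1 := by
  have : CharP F 2 := charP_of_card_eq_prime_pow hF
  have hidem : IsIdempotentElem (trF s x) := by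
    rw [IsIdempotentElem, ← sq, sq_trF, trF_sq hF]
  exact IsIdempotentElem.iff_eq_zero_or_one.mp hidem

theorem trF_mul_add_pow_seven_add_pow_seven (hF : Fintype.card F = 2 ^ s) (hs : 2 ≤ s)
    (β γ η : F) :
    trF s (β * ((η + γ) ^ 7 + η ^ 7)) =
      trF s (β * γ ^ 7 + (((β * γ) ^ 2 ^ (s - 1) + β * γ ^ 4) * η ^ 3 + β * γ ^ 2 * η ^ 5 +
        ((β * γ ^ 3) ^ 2 ^ (s - 2) + (β * γ ^ 5) ^ 2 ^ (s - 1) + β * γ ^ 6) * η)) := by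
  have : CharP F 2 := charP_of_card_eq_prime_pow hF
  have hexpand : (η + γ) ^ 7 + η ^ 7 = γ ^ 7 + η * γ ^ 6 + η ^ 2 * γ ^ 5 + η ^ 3 * γ ^ 4 +
      η ^ 4 * γ ^ 3 + η ^ 5 * γ ^ 2 + η ^ 6 * γ := by
    rw [← CharTwo.eq_add_iff_add_eq]
    simpa [Finset.sum_range_succ] using add_pow_two_pow_sub_one η γ 3
  have hsqrt (x y : F) : trF s (x ^ 2 ^ (s - 1) * y) = trF s (x * y ^ 2) :=
    trF_pow_two_pow_sub_mul hF (one_le_two.trans hs) x y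
  have hfourth (x y : F) : trF s (x ^ 2 ^ (s - 2) * y) = trF s (x * y ^ 4) :=
    trF_pow_two_pow_sub_mul hF hs x y
  rw [hexpand]
  simp only [add_mul, trF_add, hsqrt, hfourth]
  simp only [← trF_add]
  congr 1
  ring

variable [DecidableEq F]

theorem epsTr_add (hF : Fintype.card F = 2 ^ s) (x y : F) :
    epsTr s (x + y) = epsTr s x * epsTr s y := by
  have : CharP F 2 := charP_of_card_eq_prime_pow hF
  simp only [epsTr, trF_add]
  rcases trF_eq_zero_or_one hF x with hx | hx <;> rcases trF_eq_zero_or_one hF y with hy | hy <;>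
    simp [hx, hy, CharTwo.add_self_eq_zero]

end Trace

section Gates

variable {F : Type} [Field F] [Fintype F] [DecidableEq F]

theorem diagonal_mul_Xm (f : F → ℂ) (γ : F) :
    Matrix.diagonal f * Xm γ = Xm γ * Matrix.diagonal fun η => f (η + γ) := by
  ext η η'
  by_cases h : η = η' + γ <;> simp [Xm, h]

theorem Um_mul_Xm_mul_Um {s : ℕ} (hF : Fintype.card F = 2 ^ s) (n : ℕ) (β γ : F) :
    Um s n β * Xm γ * Um s n β =
      Xm γ * Matrix.diagonal fun η => epsTr s (β * ((η + γ) ^ n + η ^ n)) := by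
  simp only [Um, diagonal_mul_Xm, Matrix.mul_assoc, Matrix.diagonal_mul_diagonal, mul_add,
    epsTr_add hF]

end Gates

/-- For `q = 2^s`, `s ≥ 2`:
`U_β^{(7)} X^γ U_β^{(7)} = ε(tr(βγ^7)) X^γ U^{(3)}_{(βγ)^{2^{s-1}} + βγ^4} U^{(5)}_{βγ^2}
  Z^{(βγ^3)^{2^{s-2}} + (βγ^5)^{2^{s-1}} + βγ^6}`
(here `x ↦ x^{2^{s−1}}` and `x ↦ x^{2^{s−2}}` are the unique square- and fourth-root maps). -/
theorem U7_conjugation_identity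
    {s : ℕ} (hs : 2 ≤ s) {F : Type} [Field F] [Fintype F] [DecidableEq F]
    (hF : Fintype.card F = 2 ^ s) (β γ : F) :
    Um s 7 β * Xm γ * Um s 7 β =
      epsTr s (β * γ ^ 7) •
        (Xm γ * Um s 3 ((β * γ) ^ 2 ^ (s - 1) + β * γ ^ 4) * Um s 5 (β * γ ^ 2) *
          Zm s ((β * γ ^ 3) ^ 2 ^ (s - 2) + (β * γ ^ 5) ^ 2 ^ (s - 1) + β * γ ^ 6)) := by
  have hentry (η : F) : epsTr s (β * ((η + γ) ^ 7 + η ^ 7)) =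
      epsTr s (β * γ ^ 7) * (epsTr s (((β * γ) ^ 2 ^ (s - 1) + β * γ ^ 4) * η ^ 3) *
        epsTr s (β * γ ^ 2 * η ^ 5) *
        epsTr s (((β * γ ^ 3) ^ 2 ^ (s - 2) + (β * γ ^ 5) ^ 2 ^ (s - 1) + β * γ ^ 6) * η)) := by
    simp only [← epsTr_add hF]
    rw [epsTr, trF_mul_add_pow_seven_add_pow_seven hF hs, epsTr]
  rw [Um_mul_Xm_mul_Um hF]
  simp only [hentry, Um, Zm, Matrix.mul_assoc, Matrix.diagonal_mul_diagonal]
  rw [← Matrix.mul_smul, ← Matrix.diagonal_smul]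
  simp only [Pi.smul_def, smul_eq_mul, mul_assoc]
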